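/- Let M be an ordered multi-pushdown automaton with n > 1 stacks in normal form and P the generalized pushdown automaton constructed from M. Then for every state q of M and every stack content w of M: P has a single transition (p₀,⊥) → (q,w) in T(P) if and only if (q₀,γ₀⊥,⊥,…,⊥) reaches (q,⊥,…,⊥,w) by a finite run of T(M_{[1,n[}) (labelled by some τ ∈ Σ*). -/

import Mathlib

/-!
In `M_{[1,n[}` no transition pops from the last stack, and by the normal form each transition
pushes at most one symbol on it.  Hence a step of `M_{[1,n[}` is the same thing as a step of the
projected automaton `M'` on the remaining stacks, whose label (a symbol or `ε`) is prepended to the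
last stack.  Along a run, the last stack therefore grows by the *reverse* of the word read by `M'`
(`exists_proj_reaches` and `exists_restrictLast_reaches`).  Applied to runs
starting from `(q₀, γ₀⊥, ⊥, …, ⊥)`, this matches the words `u^R⊥`, `u ∈ L(M'(q₀,γ₀,q))`, that `P`
pushes in its first step with the last stack contents reachable in `M_{[1,n[}`.
-/

/-- A run of a labeled transition relation (labels in `A ∪ {ε}`) reading a word. -/
inductive EvalRel {Q A : Type} (Δ : Q → Option A → Q → Prop) : Q → List A → Q → Prop
  | refl (q : Q) : EvalRel Δ q [] q
  | step {q : Q} {a : Option A} {q' : Q} {w : List A} {q'' : Q} :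
      Δ q a q' → EvalRel Δ q' w q'' → EvalRel Δ q (a.toList ++ w) q''

/-- The set of all predecessors (`Pre*`) of `S` under the step relation `r`. -/
def preStar {C : Type} (r : C → C → Prop) (S : Set C) : Set C :=
  {c | ∃ c' ∈ S, Relation.ReflTransGen r c c'}

/-- `Pre⁺ = Pre ∘ Pre*`. -/
def prePlus {C : Type} (r : C → C → Prop) (S : Set C) : Set C :=
  {c | ∃ c₁, r c c₁ ∧ c₁ ∈ preStar r S}

/-- A multi-pushdown automaton with `n` stacks, states `Q`, input alphabet `A`, and
stack alphabet `Γ` (with distinguished bottom symbol `bot`).  A transition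
`Δ q γ a q' α` pops `γ i ∈ Γ ∪ {ε}` from stack `i` and pushes the word `α i` on stack `i`,
for each `i`, reading the input letter `a ∈ A ∪ {ε}`. -/
structure MPA (n : ℕ) (Q A Γ : Type) where
  bot : Γ
  Δ : Q → (Fin n → Option Γ) → Option A → Q → (Fin n → List Γ) → Prop
  q0 : Q
  γ0 : Γ
  F : Set Q

namespace MPA

variable {n : ℕ} {Q A Γ : Type}

/-- A stack content: a word in `(Γ∖{⊥})* ⬝ {⊥}`. -/
def IsStack (bot : Γ) (w : List Γ) : Prop := ∃ v, w = v ++ [bot] ∧ bot ∉ v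

/-- Well-formedness of an MPA: `γ₀ ≠ ⊥`, and each transition pushes at most two symbols on
each stack, never pushes `⊥` on a stack unless it popped `⊥` from it, and when popping `⊥`
from a stack it pushes back `α' ⬝ ⊥` with `α' ∈ (Γ∖{⊥}) ∪ {ε}`. -/
def WF (M : MPA n Q A Γ) : Prop :=
  M.γ0 ≠ M.bot ∧
  ∀ q γ a q' α, M.Δ q γ a q' α → ∀ i : Fin n,
    (α i).length ≤ 2 ∧
    (γ i ≠ some M.bot → M.bot ∉ α i) ∧
    (γ i = some M.bot → ∃ β, α i = β ++ [M.bot] ∧ M.bot ∉ β ∧ β.length ≤ 1)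

/-- An MPA is *ordered* if every transition pops from the first non-empty stack: there is `i`
such that stacks before `i` pop `⊥`, stack `i` pops an element of `Γ ∪ {ε}`, and stacks
after `i` pop nothing. -/
def Ordered (M : MPA n Q A Γ) : Prop :=
  ∀ q γ a q' α, M.Δ q γ a q' α → ∃ i : Fin n,
    (∀ j, j < i → γ j = some M.bot) ∧ (∀ j, i < j → γ j = none)

/-- One transition of the transition system `T(M)`: for each stack `i`, the popped prefix
`γ i` of the stack content is replaced by the pushed word `α i`. -/
def Step (M : MPA n Q A Γ) (c : Q × (Fin n → List Γ)) (a : Option A)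
    (c' : Q × (Fin n → List Γ)) : Prop :=
  ∃ (γ : Fin n → Option Γ) (α w : Fin n → List Γ), M.Δ c.1 γ a c'.1 α ∧
    ∀ i : Fin n, c.2 i = (γ i).toList ++ w i ∧ c'.2 i = α i ++ w i ∧ IsStack M.bot (c.2 i)

/-- A finite run of `T(M)` from `c` to `c'` labelled by the word `τ`. -/
inductive Reaches (M : MPA n Q A Γ) :
    Q × (Fin n → List Γ) → List A → Q × (Fin n → List Γ) → Prop
  | refl (c : Q × (Fin n → List Γ)) : Reaches M c [] c
  | step {c : Q × (Fin n → List Γ)} {a : Option A} {c' : Q × (Fin n → List Γ)}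
      {τ : List A} {c'' : Q × (Fin n → List Γ)} :
      M.Step c a c' → Reaches M c' τ c'' → Reaches M c (a.toList ++ τ) c''

/-- The unlabeled step relation of `T(M)`. -/
def StepAny (M : MPA n Q A Γ) (c c' : Q × (Fin n → List Γ)) : Prop := ∃ a, M.Step c a c'

/-- An ordered MPA (with at least one stack) is in *normal form* if every transition either
(i) pops a symbol from the first stack, pushing at most two symbols on the first stack and at
most one non-`⊥` symbol on each of the other stacks, or (ii) pops a non-`⊥` symbol from some
stack `i ≥ 2` whose preceding stacks are empty, pushing a single non-`⊥` symbol on the first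
stack (and restoring `⊥` on stacks `2,…,i−1`). -/
def NormalForm (M : MPA (n+1) Q A Γ) : Prop :=
  ∀ q γ a q' α, M.Δ q γ a q' α →
    ((∃ g : Γ, γ 0 = some g) ∧ (∀ j, j ≠ 0 → γ j = none) ∧
      (∀ j, j ≠ 0 → (α j).length ≤ 1 ∧ M.bot ∉ α j)) ∨
    (∃ i : Fin (n+1), 0 < i ∧
      (∀ j, j < i → γ j = some M.bot) ∧ (∀ j, i < j → γ j = none) ∧
      (∃ g : Γ, γ i = some g ∧ g ≠ M.bot) ∧
      (∃ g' : Γ, g' ≠ M.bot ∧ α 0 = [g', M.bot]) ∧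
      (∀ j, 0 < j → j < i → α j = [M.bot]) ∧ (∀ j, i ≤ j → α j = []))

/-- The initial stack contents: `γ₀⊥` on the first stack and `⊥` on the others. -/
def init (M : MPA (n+1) Q A Γ) : Fin (n+1) → List Γ :=
  fun i => if i = 0 then [M.γ0, M.bot] else [M.bot]

/-- The language of an MPA: words labelling runs of `T(M)` from `(q₀,γ₀⊥,⊥,…,⊥)` to a final
configuration `(q,⊥,…,⊥)` with `q ∈ F`. -/
def Lang (M : MPA (n+1) Q A Γ) : Set (List A) :=
  {τ | ∃ q ∈ M.F, M.Reaches (M.q0, M.init) τ (q, fun _ => [M.bot])}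

/-- The size `|M| = n + |Q| + |Σ| + |Γ| + |Δ|` of an MPA. -/
noncomputable def size (M : MPA n Q A Γ) : ℕ :=
  n + Nat.card Q + Nat.card A + Nat.card Γ +
    Nat.card {t : Q × (Fin n → Option Γ) × Option A × Q × (Fin n → List Γ) //
      M.Δ t.1 t.2.1 t.2.2.1 t.2.2.2.1 t.2.2.2.2}

end MPA

/-- A generalized pushdown automaton over states `P`, input alphabet `A`, stack alphabet `Γ`. -/
structure GPA (P A Γ : Type) where
  δ : P → Γ → Option A → P → Set (List Γ)
  p0 : P
  γ0 : Γ
  F : Set P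

namespace GPA

variable {P A Γ : Type}

/-- One transition of the transition system `T(P)` of a GPA: being in `(p, γ·w)` and
reading `a`, move to `(p', u·w)` for some `u ∈ δ(p,γ,a,p')`. -/
def Step (M : GPA P A Γ) (c : P × List Γ) (a : Option A) (c' : P × List Γ) : Prop :=
  ∃ γ w u, c.2 = γ :: w ∧ u ∈ M.δ c.1 γ a c'.1 ∧ c'.2 = u ++ w

/-- A finite run of `T(P)` from `c` to `c'` labelled by the word `τ`. -/
inductive Reaches (M : GPA P A Γ) : P × List Γ → List A → P × List Γ → Prop
  | refl (c : P × List Γ) : Reaches M c [] c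
  | step {c : P × List Γ} {a : Option A} {c' : P × List Γ} {τ : List A} {c'' : P × List Γ} :
      M.Step c a c' → Reaches M c' τ c'' → Reaches M c (a.toList ++ τ) c''

/-- The unlabeled step relation of `T(P)`. -/
def StepAny (M : GPA P A Γ) (c c' : P × List Γ) : Prop := ∃ a, M.Step c a c'

/-- The language accepted by a GPA: words labelling runs from `(p₀,γ₀)` to `F × {ε}`. -/
def Lang (M : GPA P A Γ) : Set (List A) :=
  {τ | ∃ p ∈ M.F, M.Reaches (M.p0, [M.γ0]) τ (p, [])}

end GPA

namespace MPA

variable {n : ℕ} {Q A Γ : Type}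

/-- `M_{[1,n[}`: the MPA obtained from `M` by discarding all transitions that pop from the
last stack. -/
def restrictLast (M : MPA (n+1) Q A Γ) : MPA (n+1) Q A Γ :=
  { M with Δ := fun q γ a q' α => M.Δ q γ a q' α ∧ γ (Fin.last n) = none }

/-- `M'`: the `n`-stack MPA over input alphabet `Γ` that performs the transitions of
`M_{[1,n[}` on the first `n` stacks and makes the pushed symbol (an element of `Γ ∪ {ε}`)
on the last stack visible as input label. -/
def proj (M : MPA (n+1) Q A Γ) : MPA n Q Γ Γ where
  bot := M.bot
  Δ := fun q γ b q' α =>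
    ∃ a : Option A, M.Δ q (Fin.snoc γ none) a q' (Fin.snoc α b.toList)
  q0 := M.q0
  γ0 := M.γ0
  F := M.F

/-- `L(M(q,γ,q'))`: the words labelling runs of `T(M)` from `(q, γ⊥, ⊥, …, ⊥)` to
`(q', ⊥, …, ⊥)`. -/
def LangFrom (M : MPA (n+1) Q A Γ) (q : Q) (γ : Γ) (q' : Q) : Set (List A) :=
  {τ | M.Reaches (q, fun i => if i = 0 then [γ, M.bot] else [M.bot]) τ
        (q', fun _ => [M.bot])}

end MPA

/-- The generalized pushdown automaton `P` constructed from an ordered MPA `M` (in normal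
form, with at least two stacks): its states are `Q ∪ {p₀, p_f}` (here `Sum.inr false = p₀`
and `Sum.inr true = p_f`), its input alphabet is empty, its stack alphabet is `Γ`, its
initial stack symbol is `⊥`, and its pushed languages are defined through the projected
`(n−1)`-stack OMPA `M' = proj M`. -/
def gpaOf {n : ℕ} {Q A Γ : Type} (M : MPA (n+2) Q A Γ) : GPA (Q ⊕ Bool) Empty Γ where
  δ := fun p γ _ p' =>
    match p, p' with
    | Sum.inr false, Sum.inl q' =>
        {w | γ = M.bot ∧
          ∃ u ∈ (MPA.proj M).LangFrom M.q0 M.γ0 q', w = u.reverse ++ [M.bot]}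
    | Sum.inl q, Sum.inr true => {w | γ = M.bot ∧ q ∈ M.F ∧ w = []}
    | Sum.inl q, Sum.inl q' =>
        {w | γ ≠ M.bot ∧
          ∃ (q₁ : Q) (γ' : Γ) (a : Option A),
            M.Δ q (fun j => if j = Fin.last (n+1) then some γ else some M.bot) a q₁
              (fun j => if j = 0 then [γ', M.bot]
                        else if j = Fin.last (n+1) then [] else [M.bot]) ∧
            ∃ u ∈ (MPA.proj M).LangFrom q₁ γ' q', w = u.reverse}
    | _, _ => ∅
  p0 := Sum.inr false
  γ0 := M.bot
  F := {Sum.inr true}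

namespace MPA

variable {n : ℕ} {Q A Γ : Type}

/-- A normal-form transition not popping from the last stack pushes at most one symbol on it. -/
lemma NormalForm.exists_toList_eq {M : MPA (n+2) Q A Γ} (hnf : M.NormalForm)
    {q : Q} {γ : Fin (n+2) → Option Γ} {a : Option A} {q' : Q} {α : Fin (n+2) → List Γ}
    (h : M.Δ q γ a q' α) : ∃ b : Option Γ, α (Fin.last (n+1)) = b.toList := by
  have hlen : (α (Fin.last (n+1))).length ≤ 1 := by
    rcases hnf q γ a q' α h with ⟨-, -, h3⟩ | ⟨i, -, -, -, -, -, -, h6⟩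
    · exact (h3 _ (Fin.last_pos).ne').1
    · simp [h6 _ (Fin.le_last i)]
  match hα : α (Fin.last (n+1)), hlen with
  | [], _ => exact ⟨none, rfl⟩
  | [x], _ => exact ⟨some x, rfl⟩

/-- A step of `M_{[1,n[}` projects to a step of `M'` whose label is pushed on the last stack. -/
lemma exists_proj_step {M : MPA (n+2) Q A Γ} (hnf : M.NormalForm)
    {c c' : Q × (Fin (n+2) → List Γ)} {a : Option A} (h : M.restrictLast.Step c a c') :
    ∃ b : Option Γ,
      M.proj.Step (c.1, fun i => c.2 i.castSucc) b (c'.1, fun i => c'.2 i.castSucc) ∧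
        c'.2 (Fin.last (n+1)) = b.toList ++ c.2 (Fin.last (n+1)) := by
  obtain ⟨γ, α, w, ⟨hΔ, hγ⟩, hst⟩ := h
  obtain ⟨b, hb⟩ := hnf.exists_toList_eq hΔ
  refine ⟨b, ⟨fun i => γ i.castSucc, fun i => α i.castSucc, fun i => w i.castSucc, ⟨a, ?_⟩,
    fun i => hst i.castSucc⟩, ?_⟩
  · have h1 : (Fin.snoc (fun i => γ (Fin.castSucc i)) none : Fin (n+2) → Option Γ) = γ := by
      rw [← hγ]; exact Fin.snoc_init_self γ
    have h2 : (Fin.snoc (fun i => α (Fin.castSucc i)) b.toList : Fin (n+2) → List Γ) = α := by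
      rw [← hb]; exact Fin.snoc_init_self α
    rw [h1, h2]
    exact hΔ
  · obtain ⟨e1, e2, -⟩ := hst (Fin.last (n+1))
    rw [hγ] at e1
    rw [e2, e1, hb]
    rfl

/-- A step of `M'` lifts to a step of `M_{[1,n[}` above any content `v` of the last stack. -/
lemma exists_restrictLast_step {M : MPA (n+2) Q A Γ} (hwf : M.WF)
    {d d' : Q × (Fin (n+1) → List Γ)} {b : Option Γ} (h : M.proj.Step d b d')
    {v : List Γ} (hv : IsStack M.bot v) :
    IsStack M.bot (b.toList ++ v) ∧ ∃ a : Option A,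
      M.restrictLast.Step (d.1, Fin.snoc d.2 v) a (d'.1, Fin.snoc d'.2 (b.toList ++ v)) := by
  obtain ⟨γ, α, w, ⟨a, hΔ⟩, hst⟩ := h
  constructor
  · have hb := ((hwf.2 _ _ _ _ _ hΔ) (Fin.last (n+1))).2.1
    simp only [Fin.snoc_last] at hb
    obtain ⟨v', rfl, hv'⟩ := hv
    refine ⟨b.toList ++ v', by simp, ?_⟩
    rw [List.mem_append, not_or]
    exact ⟨hb (by simp), hv'⟩
  · refine ⟨a, Fin.snoc γ none, Fin.snoc α b.toList, Fin.snoc w v, ⟨hΔ, by simp⟩, fun i => ?_⟩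
    induction i using Fin.lastCases with
    | last => simpa [restrictLast] using hv
    | cast i => simpa only [Fin.snoc_castSucc, restrictLast, proj] using hst i

lemma exists_proj_reaches {M : MPA (n+2) Q A Γ} (hnf : M.NormalForm)
    {c c' : Q × (Fin (n+2) → List Γ)} {τ : List A} (h : M.restrictLast.Reaches c τ c') :
    ∃ u : List Γ,
      M.proj.Reaches (c.1, fun i => c.2 i.castSucc) u (c'.1, fun i => c'.2 i.castSucc) ∧
        c'.2 (Fin.last (n+1)) = u.reverse ++ c.2 (Fin.last (n+1)) := by
  induction h with
  | refl c => exact ⟨[], .refl _, rfl⟩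
  | step hs _ ih =>
    obtain ⟨b, hb, eb⟩ := exists_proj_step hnf hs
    obtain ⟨u, hu, eu⟩ := ih
    refine ⟨b.toList ++ u, .step hb hu, ?_⟩
    rw [eu, eb]
    cases b <;> simp

lemma exists_restrictLast_reaches {M : MPA (n+2) Q A Γ} (hwf : M.WF)
    {d d' : Q × (Fin (n+1) → List Γ)} {u : List Γ} (h : M.proj.Reaches d u d')
    {v : List Γ} (hv : IsStack M.bot v) :
    ∃ τ : List A,
      M.restrictLast.Reaches (d.1, Fin.snoc d.2 v) τ (d'.1, Fin.snoc d'.2 (u.reverse ++ v)) := by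
  induction h generalizing v with
  | refl d => exact ⟨[], .refl _⟩
  | @step _ b _ _ _ hs _ ih =>
    obtain ⟨hv', a, ha⟩ := exists_restrictLast_step hwf hs hv
    obtain ⟨τ, hτ⟩ := ih hv'
    refine ⟨a.toList ++ τ, .step ha ?_⟩
    convert hτ using 3
    cases b <;> simp

end MPA

/-- `P` has a single transition from `(p₀,⊥)` to `(q,w)` in `T(P)` iff
`(q₀,γ₀⊥,⊥,…,⊥)` reaches `(q,⊥,…,⊥,w)` by a finite run of `T(M_{[1,n[})`. -/
theorem gpaOf_initial_correct {n : ℕ} {Q A Γ : Type} [Finite Q] [Finite A] [Finite Γ]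
    (M : MPA (n+2) Q A Γ) (hwf : M.WF) (hord : M.Ordered) (hnf : M.NormalForm)
    (q : Q) (w : List Γ) (hw : MPA.IsStack M.bot w) :
    (∃ a, (gpaOf M).Step (Sum.inr false, [M.bot]) a (Sum.inl q, w)) ↔
    (∃ τ : List A,
      (MPA.restrictLast M).Reaches (M.q0, M.init) τ
        (q, fun i => if i = Fin.last (n+1) then w else [M.bot])) := by
  have hstep : (∃ a, (gpaOf M).Step (Sum.inr false, [M.bot]) a (Sum.inl q, w)) ↔
      ∃ u ∈ (MPA.proj M).LangFrom M.q0 M.γ0 q, w = u.reverse ++ [M.bot] := by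
    constructor
    · rintro ⟨a, γ, w', x, hγ, ⟨-, u, hu, rfl⟩, hx⟩
      obtain ⟨rfl, rfl⟩ : M.bot = γ ∧ [] = w' := by simpa using hγ
      exact ⟨u, hu, by simpa using hx⟩
    · rintro ⟨u, hu, rfl⟩
      exact ⟨none, M.bot, [], _, rfl, ⟨rfl, u, hu, rfl⟩, by simp⟩
  rw [hstep]
  constructor
  · rintro ⟨u, hu, rfl⟩
    have hbot : MPA.IsStack M.bot [M.bot] := ⟨[], rfl, by simp⟩
    obtain ⟨τ, hτ⟩ := MPA.exists_restrictLast_reaches hwf hu hbot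
    refine ⟨τ, ?_⟩
    convert hτ using 2
    · ext1 i
      induction i using Fin.lastCases with
      | last => simp [MPA.init]
      | cast i => simp [MPA.init, MPA.proj]
    · ext1 i
      induction i using Fin.lastCases with
      | last => simp
      | cast i => simp [MPA.proj]
  · rintro ⟨τ, hτ⟩
    obtain ⟨u, hu, eu⟩ := MPA.exists_proj_reaches hnf hτ
    refine ⟨u, ?_, by simpa [MPA.init] using eu⟩
    simpa [MPA.LangFrom, MPA.init, MPA.proj] using hu
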